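/- Let C be a nonempty closed convex subset of a real Hilbert space H, T a metrically nonspreading mapping of C into itself (with the metric induced by the norm), {α_n} a sequence in (0,1] with ∑_{n=1}^∞ α_n = ∞, and {x_n} the sequence defined by x₁ ∈ C and x_{n+1} = (1 − α_n)·x_n + α_n·Tx_n for all n ∈ ℕ. Then T has a fixed point if and only if {x_n} is bounded. -/

import Mathlib

open Filter

/-!
Call `z` an attractive point of `T` if `dist z (T y) ≤ dist z y` for all `y ∈ C`. Fixed points of a
nonspreading mapping are attractive, an attractive point confines every Mann sequence to a ball,
and the projection of an attractive point onto a closed convex `C` is fixed by uniqueness of the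
projection. It remains to find an attractive point when the Mann sequence is bounded. Convexity of
the squared distance and the nonspreading inequality telescope to
`∑ α k * (dist (T (x k)) (T y) ^ 2 - dist (T (x k)) y ^ 2) ≤ dist (x 0) (T y) ^ 2`.
In a Hilbert space `‖t - a‖ ^ 2 - ‖t - b‖ ^ 2` is affine and weakly continuous in `t`, so after
division by `∑ α k → ∞` every weak cluster point of the weighted means of `T (x k)` is attractive.
-/

open scoped Topology

/-- Metrically nonspreading self-mappings of a metric space. -/
def MetricallyNonspreading {X : Type*} [PseudoMetricSpace X] (T : X → X) : Prop :=
  ∀ x y, 2 * dist (T x) (T y) ^ 2 ≤ dist (T x) y ^ 2 + dist (T y) x ^ 2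

/-- Attractive points, in the sense of Takahashi and Takeuchi, of a self-mapping of a subset `C` of
a metric space. They replace fixed points when `C` is not closed or convex, and need not lie
in `C`. -/
def IsAttractivePoint {X : Type*} [PseudoMetricSpace X] {C : Set X} (T : C → C) (z : X) : Prop :=
  ∀ y : C, dist z (T y) ≤ dist z y

/-- Mann iterations of a self-mapping `T` of `C` with relaxation parameters `α`. The set `C` need
not be convex: that the iterates stay in `C` is built into the type of `x`. -/
def IsMannSequence {E : Type*} [AddCommGroup E] [Module ℝ E] {C : Set E} (T : C → C) (α : ℕ → ℝ)
    (x : ℕ → C) : Prop :=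
  ∀ n, (x (n + 1) : E) = (1 - α n) • (x n : E) + α n • (T (x n) : E)

section MetricSpace

variable {X : Type*} [PseudoMetricSpace X]

namespace MetricallyNonspreading

theorem dist_map_le_three_mul_add {T : X → X} (hT : MetricallyNonspreading T) (x p : X) :
    dist (T x) (T p) ≤ 3 * dist (T p) p + dist x p := by
  have h_left : dist (T x) p ≤ dist (T x) (T p) + dist (T p) p := dist_triangle _ _ _
  have h_right : dist (T p) x ≤ dist (T p) p + dist x p := dist_triangle_right _ _ _
  have h_sq : (dist (T x) (T p) - dist (T p) p) ^ 2 ≤ (2 * dist (T p) p + dist x p) ^ 2 := by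
    have h_left_sq := pow_le_pow_left₀ dist_nonneg h_left 2
    have h_right_sq := pow_le_pow_left₀ dist_nonneg h_right 2
    have h_cross : 0 ≤ dist (T p) p * dist x p := by positivity
    linarith [hT x p, sq_nonneg (dist (T p) p)]
  linarith [le_of_abs_le (abs_le_of_sq_le_sq h_sq (by positivity))]

theorem isBounded_image {T : X → X} (hT : MetricallyNonspreading T) {s : Set X}
    (hs : Bornology.IsBounded s) : Bornology.IsBounded (T '' s) := by
  rcases s.eq_empty_or_nonempty with rfl | ⟨p, -⟩
  · simp
  obtain ⟨r, hr⟩ := hs.subset_closedBall p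
  refine (Metric.isBounded_iff_subset_closedBall (T p)).2 ⟨3 * dist (T p) p + r, ?_⟩
  rintro _ ⟨x, hx, rfl⟩
  have hxr : dist x p ≤ r := hr hx
  exact (hT.dist_map_le_three_mul_add x p).trans (by linarith)

theorem isAttractivePoint_of_isFixedPt {C : Set X} {T : C → C}
    (hT : MetricallyNonspreading T) {u : C} (hu : Function.IsFixedPt T u) :
    IsAttractivePoint T (u : X) := by
  intro y
  have h : 2 * dist u (T y) ^ 2 ≤ dist u y ^ 2 + dist (T y) u ^ 2 := by
    simpa only [hu.eq] using hT u y
  rw [dist_comm (T y) u] at h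
  exact le_of_sq_le_sq (by linarith : dist u (T y) ^ 2 ≤ dist u y ^ 2) dist_nonneg

end MetricallyNonspreading

end MetricSpace

section NormedSpace

variable {E : Type*} [SeminormedAddCommGroup E] [NormedSpace ℝ E] {C : Set E} {T : C → C}
  {α : ℕ → ℝ} {x : ℕ → C}

theorem IsMannSequence.isBounded_range_of_isAttractivePoint (hx : IsMannSequence T α x)
    (hα : ∀ n, α n ∈ Set.Icc (0 : ℝ) 1) {z : E} (hz : IsAttractivePoint T z) :
    Bornology.IsBounded (Set.range fun n ↦ (x n : E)) := by
  have h_mem (n : ℕ) : (x n : E) ∈ Metric.closedBall z (dist z (x 0)) := by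
    induction n with
    | zero => exact (dist_comm _ _).le
    | succ n ih =>
      have h_map : (T (x n) : E) ∈ Metric.closedBall z (dist z (x 0)) :=
        Metric.mem_closedBall'.2 ((hz (x n)).trans (Metric.mem_closedBall'.1 ih))
      rw [hx n]
      exact convex_closedBall z _ ih h_map (sub_nonneg.2 (hα n).2) (hα n).1 (sub_add_cancel _ _)
  exact Metric.isBounded_closedBall.subset (Set.range_subset_iff.2 h_mem)

theorem dist_sq_add_smul_le (z u v : E) {a : ℝ} (ha : a ∈ Set.Icc (0 : ℝ) 1) :
    dist ((1 - a) • u + a • v) z ^ 2 ≤ (1 - a) * dist u z ^ 2 + a * dist v z ^ 2 :=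
  ((convexOn_dist z convex_univ).pow (fun _ _ ↦ dist_nonneg) 2).2 (Set.mem_univ u)
    (Set.mem_univ v) (sub_nonneg.2 ha.2) ha.1 (sub_add_cancel _ _)

theorem MetricallyNonspreading.dist_sq_add_smul_map_le (hT : MetricallyNonspreading T) (u y : C)
    {a : ℝ} (ha : a ∈ Set.Icc (0 : ℝ) 1) :
    dist ((1 - a) • (u : E) + a • (T u : E)) (T y) ^ 2 +
        a * (dist (T u : E) (T y) ^ 2 - dist (T u : E) y ^ 2) ≤ dist (u : E) (T y) ^ 2 := by
  have h_nonspreading :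
      2 * dist (T u : E) (T y) ^ 2 ≤ dist (T u : E) y ^ 2 + dist (u : E) (T y) ^ 2 := by
    simpa only [Subtype.dist_eq, dist_comm (T y : E) u] using hT u y
  linarith [dist_sq_add_smul_le (T y : E) u (T u) ha,
    mul_le_mul_of_nonneg_left h_nonspreading ha.1]

theorem IsMannSequence.sum_mul_dist_sq_sub_dist_sq_le (hx : IsMannSequence T α x)
    (hT : MetricallyNonspreading T) (hα : ∀ n, α n ∈ Set.Icc (0 : ℝ) 1) (y : C) (n : ℕ) :
    ∑ k ∈ Finset.range n, α k * (dist (T (x k) : E) (T y) ^ 2 - dist (T (x k) : E) y ^ 2) ≤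
      dist (x 0 : E) (T y) ^ 2 := by
  calc
    _ ≤ ∑ k ∈ Finset.range n,
          (dist (x k : E) (T y) ^ 2 - dist (x (k + 1) : E) (T y) ^ 2) := by
      refine Finset.sum_le_sum fun k _ ↦ ?_
      rw [hx k]
      linarith [hT.dist_sq_add_smul_map_le (x k) y (hα k)]
    _ = dist (x 0 : E) (T y) ^ 2 - dist (x n : E) (T y) ^ 2 := Finset.sum_range_sub' _ n
    _ ≤ dist (x 0 : E) (T y) ^ 2 := sub_le_self _ (sq_nonneg _)

end NormedSpace

section InnerProductSpace

theorem exists_ultrafilter_tendsto_inner {𝕜 H ι : Type*} [RCLike 𝕜] [NormedAddCommGroup H]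
    [InnerProductSpace 𝕜 H] [CompleteSpace H] {l : Filter ι} [l.NeBot] {w : ι → H} {M : ℝ}
    (hw : ∀ᶠ i in l, ‖w i‖ ≤ M) :
    ∃ (U : Ultrafilter ι) (z : H), (U : Filter ι) ≤ l ∧
      ∀ y, Tendsto (fun i ↦ inner 𝕜 (w i) y) U (𝓝 (inner 𝕜 z y)) := by
  let f : ι → WeakDual 𝕜 H := fun i ↦
    StrongDual.toWeakDual (InnerProductSpace.toDual 𝕜 H (w i))
  have hf : ∀ᶠ i in l, f i ∈ WeakDual.toStrongDual ⁻¹' Metric.closedBall (0 : StrongDual 𝕜 H) M :=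
    hw.mono fun i hi ↦ mem_closedBall_zero_iff.2 <|
      ((InnerProductSpace.toDual 𝕜 H).norm_map (w i)).trans_le hi
  obtain ⟨φ, -, hφ⟩ := (WeakDual.isCompact_closedBall 0 M).exists_mapClusterPt (f := l) (u := f)
    (tendsto_principal.2 hf)
  obtain ⟨U, hU, hUφ⟩ := mapClusterPt_iff_ultrafilter.1 hφ
  refine ⟨U, (InnerProductSpace.toDual 𝕜 H).symm (WeakDual.toStrongDual φ), hU, fun y ↦ ?_⟩
  rw [InnerProductSpace.toDual_symm_apply]
  exact ((WeakDual.eval_continuous y).tendsto φ).comp hUφ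

variable {H : Type*} [NormedAddCommGroup H] [InnerProductSpace ℝ H]

theorem dist_sq_sub_dist_sq_eq_inner (t a b : H) :
    dist t a ^ 2 - dist t b ^ 2 = 2 * inner ℝ t (b - a) + (‖a‖ ^ 2 - ‖b‖ ^ 2) := by
  rw [dist_eq_norm, dist_eq_norm, norm_sub_sq_real, norm_sub_sq_real, inner_sub_right]
  ring

theorem sum_mul_dist_sq_centerMass_sub {ι : Type*} (s : Finset ι) {w : ι → ℝ}
    (hw : ∑ i ∈ s, w i ≠ 0) (t : ι → H) (a b : H) :
    (∑ i ∈ s, w i) * (dist (s.centerMass w t) a ^ 2 - dist (s.centerMass w t) b ^ 2) =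
      ∑ i ∈ s, w i * (dist (t i) a ^ 2 - dist (t i) b ^ 2) := by
  have h_inner :
      (∑ i ∈ s, w i) * inner ℝ (s.centerMass w t) (b - a) =
        ∑ i ∈ s, w i * inner ℝ (t i) (b - a) := by
    simp only [Finset.centerMass, real_inner_smul_left, mul_inv_cancel_left₀ hw, sum_inner]
  simp only [dist_sq_sub_dist_sq_eq_inner, mul_add, Finset.sum_add_distrib, ← Finset.sum_mul,
    mul_left_comm _ (2 : ℝ), ← Finset.mul_sum, h_inner]

theorem dist_le_dist_of_tendsto_inner {ι : Type*} {l : Filter ι} [l.NeBot] {w : ι → H} {z : H}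
    (hw : ∀ y, Tendsto (fun i ↦ inner ℝ (w i) y) l (𝓝 (inner ℝ z y))) {a b : H} {ε : ι → ℝ}
    (hε : Tendsto ε l (𝓝 0)) (h : ∀ᶠ i in l, dist (w i) a ^ 2 - dist (w i) b ^ 2 ≤ ε i) :
    dist z a ≤ dist z b := by
  have h_lim : Tendsto (fun i ↦ dist (w i) a ^ 2 - dist (w i) b ^ 2) l
      (𝓝 (dist z a ^ 2 - dist z b ^ 2)) := by
    simpa only [dist_sq_sub_dist_sq_eq_inner] using ((hw (b - a)).const_mul 2).add_const _
  exact le_of_sq_le_sq (sub_nonpos.1 (le_of_tendsto_of_tendsto h_lim hε h)) dist_nonneg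

variable {C : Set H} {T : C → C}

theorem IsAttractivePoint.exists_isFixedPt (hCne : C.Nonempty) (hCc : IsComplete C)
    (hCv : Convex ℝ C) {z : H} (hz : IsAttractivePoint T z) :
    ∃ u : C, Function.IsFixedPt T u := by
  obtain ⟨p, hpC, hp⟩ := exists_norm_eq_iInf_of_complete_convex hCne hCc hCv z
  let u : C := ⟨p, hpC⟩
  have h_obtuse : inner ℝ (z - p) (T u - p) ≤ 0 :=
    (norm_eq_iInf_iff_real_inner_le_zero hCv hpC).1 hp _ (T u).2
  have h_closer : ‖(z - p) - (T u - p)‖ ≤ ‖z - p‖ := by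
    simpa only [sub_sub_sub_cancel_right, ← dist_eq_norm] using hz u
  have h_sq : ‖(T u : H) - p‖ ^ 2 ≤ 0 := by
    have h_closer_sq := pow_le_pow_left₀ (norm_nonneg _) h_closer 2
    rw [norm_sub_sq_real] at h_closer_sq
    linarith
  exact ⟨u, Subtype.ext (sub_eq_zero.1 (norm_eq_zero.1 ((sq_nonpos_iff _).1 h_sq)))⟩

theorem IsMannSequence.exists_isAttractivePoint [CompleteSpace H] {α : ℕ → ℝ} {x : ℕ → C}
    (hx : IsMannSequence T α x) (hT : MetricallyNonspreading T)
    (hα : ∀ n, α n ∈ Set.Icc (0 : ℝ) 1)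
    (hα_sum : Tendsto (fun n ↦ ∑ k ∈ Finset.range n, α k) atTop atTop)
    (hbd : Bornology.IsBounded (Set.range x)) :
    ∃ z : H, IsAttractivePoint T z := by
  let mean (n : ℕ) : H := (Finset.range n).centerMass α fun k ↦ (T (x k) : H)
  have h_pos : ∀ᶠ n in atTop, 0 < ∑ k ∈ Finset.range n, α k := hα_sum.eventually_gt_atTop 0
  have h_image_bdd : Bornology.IsBounded (Subtype.val '' (T '' Set.range x) : Set H) :=
    Bornology.isBounded_image_subtype_val.2 (hT.isBounded_image hbd)
  obtain ⟨M, hM⟩ := h_image_bdd.subset_closedBall 0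
  have h_mean_bdd : ∀ᶠ n in atTop, ‖mean n‖ ≤ M := h_pos.mono fun n hn ↦
    mem_closedBall_zero_iff.1 <| (convex_closedBall (0 : H) M).centerMass_mem
      (fun k _ ↦ (hα k).1) hn fun k _ ↦ hM ⟨_, ⟨_, ⟨k, rfl⟩, rfl⟩, rfl⟩
  obtain ⟨U, z, hU, hz⟩ := exists_ultrafilter_tendsto_inner (𝕜 := ℝ) h_mean_bdd
  refine ⟨z, fun y ↦ dist_le_dist_of_tendsto_inner hz
    ((hα_sum.const_div_atTop (dist (x 0 : H) (T y) ^ 2)).mono_left hU) ?_⟩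
  filter_upwards [hU h_pos] with n hn
  rw [le_div_iff₀' hn, sum_mul_dist_sq_centerMass_sub _ hn.ne']
  exact hx.sum_mul_dist_sq_sub_dist_sq_le hT hα y n

theorem IsMannSequence.isBounded_range_iff_exists_isAttractivePoint [CompleteSpace H]
    {α : ℕ → ℝ} {x : ℕ → C} (hx : IsMannSequence T α x) (hT : MetricallyNonspreading T)
    (hα : ∀ n, α n ∈ Set.Icc (0 : ℝ) 1)
    (hα_sum : Tendsto (fun n ↦ ∑ k ∈ Finset.range n, α k) atTop atTop) :
    Bornology.IsBounded (Set.range fun n ↦ (x n : H)) ↔ ∃ z : H, IsAttractivePoint T z := by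
  refine ⟨fun hbd ↦ hx.exists_isAttractivePoint hT hα hα_sum ?_,
    fun ⟨z, hz⟩ ↦ hx.isBounded_range_of_isAttractivePoint hα hz⟩
  exact Bornology.isBounded_image_subtype_val.1 (by rwa [← Set.range_comp])

end InnerProductSpace

/-- Mann iteration for a metrically nonspreading self-mapping `T` of a nonempty closed
convex subset of a real Hilbert space: if `αₙ ∈ (0,1]` and `∑ αₙ = ∞`, then `T` has a
fixed point if and only if the Mann sequence `{xₙ}` is bounded. -/
theorem stmt_15 {H : Type*} [NormedAddCommGroup H] [InnerProductSpace ℝ H]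
    [CompleteSpace H] (C : Set H) (hC : C.Nonempty) (hCc : IsClosed C) (hCv : Convex ℝ C)
    (T : C → C)
    (hT : ∀ x y : C, 2 * dist (T x) (T y) ^ 2 ≤ dist (T x) y ^ 2 + dist (T y) x ^ 2)
    (α : ℕ → ℝ) (hα : ∀ n, α n ∈ Set.Ioc (0 : ℝ) 1)
    (hαsum : Tendsto (fun n : ℕ => ∑ k ∈ Finset.range n, α k) atTop atTop)
    (x : ℕ → C)
    (hx : ∀ n : ℕ, (x (n + 1) : H) = (1 - α n) • (x n : H) + α n • (T (x n) : H)) :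
    (∃ u : C, T u = u) ↔ Bornology.IsBounded (Set.range fun n : ℕ => (x n : H)) := by
  have hT' : MetricallyNonspreading T := hT
  have hx' : IsMannSequence T α x := hx
  have hfix : (∃ u : C, T u = u) ↔ ∃ z : H, IsAttractivePoint T z :=
    ⟨fun ⟨u, hu⟩ ↦ ⟨u, hT'.isAttractivePoint_of_isFixedPt hu⟩,
      fun ⟨_, hz⟩ ↦ hz.exists_isFixedPt hC hCc.isComplete hCv⟩
  exact hfix.trans (hx'.isBounded_range_iff_exists_isAttractivePoint hT'
    (fun n ↦ Set.Ioc_subset_Icc_self (hα n)) hαsum).symm
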